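/- arXiv:1908.01309 — 2 statements merged into one kernel-verified Lean document; each statement's English description precedes it below -/
import Mathlib

section
/- Let 0 < t < π/3 and let q, n be positive integers with q ≤ n/5. Let X = {x_1,…,x_n} be a multiset of n elements of ℝ modulo π such that no interval of ℝ modulo π of length 3t contains n − q or more elements of X (with multiplicity). Then there exist x ∈ ℝ modulo π and ρ with 0 ≤ ρ < π/3 such that the interval I(x,ρ) contains at least q elements of X and the complement (ℝ modulo π) − I(x, ρ + t) contains at least q elements of X. -/
/-!
Suppose no separating interval exists: every interval `I(c, ρ)` with `ρ < π/3` that holds at least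
`q` points has fewer than `q` points outside `I(c, ρ + t)`. The spread hypothesis then forces
`ρ > 2t`, since otherwise `I(c, 3t)` would contain more than `n - q` points. Moreover `I(c, ρ + t)`
contains more than `n - q ≥ 4q` points, so one of its two halves, of length
`(ρ + t) / 2 < 3ρ / 4`, again holds at least `q` points. Thus any such interval shrinks by the
factor `3/4` and, iterating, becomes shorter than `2t`: a contradiction.
A first interval, of length `π/4`, comes from bisecting the whole circle twice.
-/

open scoped Classical

/-- `⌊x⌉`: the distance from `x` to the nearest integer multiple of `π`; it induces the
metric on `ℝ` modulo `π`, points of which we represent by real representatives.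
`semiabs (x - c) ≤ ρ/2` says that `x` lies in the interval `I(c,ρ)` of `ℝ` mod `π`. -/
noncomputable def semiabs (x : ℝ) : ℝ :=
  sInf {y : ℝ | ∃ k : ℤ, y = |x - k * Real.pi|}

/-- The infimum defining `semiabs` is attained. -/
lemma semiabs_le_iff (y r : ℝ) : semiabs y ≤ r ↔ ∃ k : ℤ, |y - k * Real.pi| ≤ r := by
  have hbdd : BddBelow {z : ℝ | ∃ k : ℤ, z = |y - k * Real.pi|} :=
    ⟨0, by rintro _ ⟨k, rfl⟩; exact abs_nonneg _⟩
  constructor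
  · intro h
    refine ⟨round (y / Real.pi), le_trans ?_ h⟩
    refine le_csInf ⟨_, 0, rfl⟩ ?_
    rintro _ ⟨k, rfl⟩
    have hp := Real.pi_pos
    have scale : ∀ m : ℤ, |y - m * Real.pi| = |y / Real.pi - m| * Real.pi := by
      intro m
      rw [← abs_of_pos hp, ← abs_mul, abs_of_pos hp]
      congr 1
      field_simp
    rw [scale, scale]
    exact mul_le_mul_of_nonneg_right (round_le _ _) hp.le
  · rintro ⟨k, hk⟩
    exact (csInf_le hbdd ⟨k, rfl⟩).trans hk

/-- The number of points of the family `x` lying in the interval `I(c, ρ)`. -/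
noncomputable def intervalCount {n : ℕ} (x : Fin n → ℝ) (c ρ : ℝ) : ℕ :=
  (Finset.univ.filter fun i => semiabs (x i - c) ≤ ρ / 2).card

lemma intervalCount_mono {n : ℕ} (x : Fin n → ℝ) (c : ℝ) {ρ σ : ℝ} (h : ρ ≤ σ) :
    intervalCount x c ρ ≤ intervalCount x c σ := by
  refine Finset.card_le_card fun i hi => ?_
  simp only [Finset.mem_filter, Finset.mem_univ, true_and] at hi ⊢
  linarith

/-- Pigeonhole on the two halves of an interval. -/
lemma exists_half {n : ℕ} (x : Fin n → ℝ) (c ρ : ℝ) (m : ℕ)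
    (h : 2 * m ≤ intervalCount x c ρ) : ∃ c', m ≤ intervalCount x c' (ρ / 2) := by
  by_contra! hlt
  have hle : intervalCount x c ρ ≤
      intervalCount x (c - ρ / 4) (ρ / 2) + intervalCount x (c + ρ / 4) (ρ / 2) := by
    refine le_trans (Finset.card_le_card fun i hi => ?_) (Finset.card_union_le _ _)
    simp only [Finset.mem_union, Finset.mem_filter, Finset.mem_univ, true_and,
      semiabs_le_iff] at hi ⊢
    obtain ⟨k, hk⟩ := hi
    rw [abs_le] at hk
    rcases le_total (x i - c - k * Real.pi) 0 with h0 | h0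
    · exact Or.inl ⟨k, abs_le.2 ⟨by linarith, by linarith⟩⟩
    · exact Or.inr ⟨k, abs_le.2 ⟨by linarith, by linarith⟩⟩
  have h1 := hlt (c - ρ / 4)
  have h2 := hlt (c + ρ / 4)
  omega

lemma intervalCount_pi {n : ℕ} (x : Fin n → ℝ) : intervalCount x 0 Real.pi = n := by
  have hall : ∀ i, semiabs (x i - 0) ≤ Real.pi / 2 := by
    intro i
    rw [semiabs_le_iff]
    refine ⟨round (x i / Real.pi), ?_⟩
    have hp := Real.pi_pos
    have h := abs_le.1 (abs_sub_round (x i / Real.pi))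
    have e : x i - 0 - round (x i / Real.pi) * Real.pi
        = (x i / Real.pi - round (x i / Real.pi)) * Real.pi := by
      field_simp
      ring
    rw [e, abs_le]
    constructor <;> nlinarith [h.1, h.2]
  rw [intervalCount, Finset.filter_true_of_mem fun i _ => hall i, Finset.card_univ,
    Fintype.card_fin]

/-- Lemma 3.10: a separating interval for a spread-out multiset of
points of `ℝ` modulo `π`. -/
theorem separator_lemma (t : ℝ) (ht0 : 0 < t) (ht : t < Real.pi / 3)
    (n q : ℕ) (hq : 0 < q) (hn : 0 < n) (hq5 : (q : ℝ) ≤ (n : ℝ) / 5)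
    (x : Fin n → ℝ)
    (hspread : ∀ c : ℝ,
      ((Finset.univ.filter fun i => semiabs (x i - c) ≤ 3 * t / 2).card : ℝ) <
        (n : ℝ) - (q : ℝ)) :
    ∃ c ρ : ℝ, 0 ≤ ρ ∧ ρ < Real.pi / 3 ∧
      q ≤ (Finset.univ.filter fun i => semiabs (x i - c) ≤ ρ / 2).card ∧
      q ≤ (Finset.univ.filter fun i => ¬ semiabs (x i - c) ≤ (ρ + t) / 2).card := by
  by_contra hno
  have hp := Real.pi_pos
  have hqn : 5 * q ≤ n := by
    have : (5 * q : ℝ) ≤ n := by linarith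
    exact_mod_cast this
  have hspread' : ∀ c, intervalCount x c (3 * t) + q < n := by
    intro c
    have h : (intervalCount x c (3 * t) : ℝ) < n - q := hspread c
    have : (intervalCount x c (3 * t) : ℝ) + q < n := by linarith
    exact_mod_cast this
  have hbig : ∀ c ρ, 0 ≤ ρ → ρ < Real.pi / 3 → q ≤ intervalCount x c ρ →
      n < intervalCount x c (ρ + t) + q := by
    intro c ρ h0 h1 h2
    by_contra! h3
    refine hno ⟨c, ρ, h0, h1, h2, ?_⟩
    have h4 := Finset.card_filter_add_card_filter_not (s := (Finset.univ : Finset (Fin n)))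
      (fun i => semiabs (x i - c) ≤ (ρ + t) / 2)
    rw [Finset.card_univ, Fintype.card_fin] at h4
    unfold intervalCount at h3
    omega
  have hlong : ∀ c ρ, 0 ≤ ρ → ρ < Real.pi / 3 → q ≤ intervalCount x c ρ → 2 * t < ρ := by
    intro c ρ h0 h1 h2
    by_contra! hle
    have h3 := hbig c ρ h0 h1 h2
    have h4 := intervalCount_mono x c (show ρ + t ≤ 3 * t by linarith)
    have h5 := hspread' c
    omega
  have hshort : ∀ k : ℕ, (3 / 4 : ℝ) ^ k * (Real.pi / 4) < Real.pi / 3 := by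
    intro k
    have : (3 / 4 : ℝ) ^ k ≤ 1 := pow_le_one₀ (by norm_num) (by norm_num)
    nlinarith
  have hdescent : ∀ k : ℕ, ∃ c ρ, 0 ≤ ρ ∧ ρ ≤ (3 / 4 : ℝ) ^ k * (Real.pi / 4) ∧
      q ≤ intervalCount x c ρ := by
    intro k
    induction k with
    | zero =>
      obtain ⟨c₁, h₁⟩ := exists_half x 0 Real.pi (2 * q) (by rw [intervalCount_pi]; omega)
      obtain ⟨c₂, h₂⟩ := exists_half x c₁ _ q h₁
      exact ⟨c₂, _, by positivity, by linarith, h₂⟩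
    | succ k ih =>
      obtain ⟨c, ρ, h0, h1, h2⟩ := ih
      have h3 := h1.trans_lt (hshort k)
      have h4 := hbig c ρ h0 h3 h2
      have h5 := hlong c ρ h0 h3 h2
      obtain ⟨c', h'⟩ := exists_half x c (ρ + t) q (by omega)
      refine ⟨c', _, by positivity, ?_, h'⟩
      rw [pow_succ]
      linarith
  obtain ⟨k, hk⟩ := exists_pow_lt_of_lt_one (show 0 < 2 * t / (Real.pi / 4) by positivity)
    (show (3 / 4 : ℝ) < 1 by norm_num)
  rw [lt_div_iff₀ (by positivity)] at hk
  obtain ⟨c, ρ, h0, h1, h2⟩ := hdescent k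
  have h3 := hlong c ρ h0 (h1.trans_lt (hshort k)) h2
  linarith
end

section
/- Let Z be a centered real Gaussian random variable and let (Z_1, Z_2) be a centered jointly Gaussian pair of real random variables. For an integer m ≥ 0, let p(m) := 0 if m is odd and p(m) := (m−1)!! if m is even (with p(0) = 1). Then for all integers s, t ≥ 0: (a) E[Z^s] = p(s)·(Var Z)^{s/2}; and (b) Cov(Z_1^s, Z_2^t) = Σ_{u=1}^{min{s,t}} C(s,u)·C(t,u)·u!·p(s−u)·p(t−u)·(Var Z_1)^{(s−u)/2}·(Var Z_2)^{(t−u)/2}·Cov(Z_1, Z_2)^u, where C(a,b) denotes the binomial coefficient. -/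
/-!
Both parts follow from recursions for Gaussian moments. In one dimension the moment generating
function `g t = exp (v t² / 2)` satisfies `g' = v t g`; differentiating repeatedly and evaluating at
`0` gives `E[Z^(n+2)] = (n+1) v E[Z^n]` (`gaussian_moment_succ_succ`), which is also the recursion
of `pairCount n * v ^ (n/2)`.

For the pair `Z₁ = a X + b Y`, `Z₂ = c X + d Y`, the moment recursion for `v = 1` is Stein's
identity `E[X P(X)] = E[P'(X)]` on monomials. By linearity it holds for polynomials, and Fubini's
theorem lets it be applied in each coordinate, giving
`E[Z₁^(s+1) Z₂^t] = s A E[Z₁^(s-1) Z₂^t] + t r E[Z₁^s Z₂^(t-1)]`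
with `A = Var Z₁` and `r = Cov(Z₁, Z₂)` (`mixedMoment_succ`). The sum over the number `u` of cross
pairs satisfies the same recursion by Pascal's rule (`crossTerm_succ_succ`), hence equals the
mixed moment; its `u = 0` term is `E[Z₁^s] E[Z₂^t]`, and subtracting it leaves the covariance.
-/

open MeasureTheory ProbabilityTheory

/-- `p(m)`: the number of perfect matchings of `m` points: `0` for odd `m`,
`(m-1)!!` for even `m` (with `p 0 = 1`). -/
def pairCount (m : ℕ) : ℕ := if Even m then Nat.doubleFactorial (m - 1) else 0

/-! ### Moments of a single Gaussian -/

/-- The Gaussian moment recursion `E[Z^(n+2)] = (n+1) v E[Z^n]`, read off from the differential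
equation `g' = v t g` satisfied by the moment generating function `g t = exp (v t² / 2)`. -/
lemma gaussian_moment_succ_succ (v : NNReal) (n : ℕ) :
    ∫ x, x ^ (n + 2) ∂gaussianReal 0 v = (n + 1) * v * ∫ x, x ^ n ∂gaussianReal 0 v := by
  have hint : ∀ t : ℝ, t ∈ interior (integrableExpSet id (gaussianReal 0 v)) := by
    intro t; simp [integrableExpSet_id_gaussianReal]
  have hd := fun (t : ℝ) (n : ℕ) => hasDerivAt_iteratedDeriv_mgf (hint t) n
  have hsucc : ∀ (t : ℝ) (n : ℕ), HasDerivAt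
      (iteratedDeriv n (mgf id (gaussianReal 0 v)))
      (iteratedDeriv (n + 1) (mgf id (gaussianReal 0 v)) t) t := by
    intro t n
    rw [iteratedDeriv_mgf (hint t)]
    exact hd t n
  have key : ∀ (n : ℕ) (t : ℝ), iteratedDeriv (n + 2) (mgf id (gaussianReal 0 v)) t
      = v * t * iteratedDeriv (n + 1) (mgf id (gaussianReal 0 v)) t
        + (n + 1) * v * iteratedDeriv n (mgf id (gaussianReal 0 v)) t := by
    have h1 : ∀ t : ℝ, iteratedDeriv 1 (mgf id (gaussianReal 0 v)) t
        = v * t * iteratedDeriv 0 (mgf id (gaussianReal 0 v)) t := by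
      intro t
      simp only [iteratedDeriv_one, iteratedDeriv_zero, mgf_id_gaussianReal]
      have : HasDerivAt (fun t : ℝ => (0 : ℝ) * t + v * t ^ 2 / 2) (v * t) t := by
        have := (((hasDerivAt_pow 2 t).const_mul (v : ℝ)).div_const 2).const_add 0
        have e : (fun t : ℝ => (0 : ℝ) * t + v * t ^ 2 / 2) =
            fun t : ℝ => (0 : ℝ) + v * t ^ 2 / 2 := by
          funext t; ring
        rw [e]
        refine this.congr_deriv ?_
        push_cast; ring
      rw [this.exp.deriv]; ring
    intro n
    induction n with
    | zero =>
      intro t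
      have hR : HasDerivAt (fun t : ℝ => v * t * iteratedDeriv 0 (mgf id (gaussianReal 0 v)) t)
          _ t := ((hasDerivAt_id t).const_mul (v : ℝ)).mul (hsucc t 0)
      have hL := hsucc t 1
      rw [funext h1] at hL
      rw [hL.unique hR]
      simp; ring
    | succ n ih =>
      intro t
      have hR : HasDerivAt (fun t : ℝ => v * t * iteratedDeriv (n + 1) (mgf id (gaussianReal 0 v)) t
          + (n + 1) * v * iteratedDeriv n (mgf id (gaussianReal 0 v)) t)
          _ t := (((hasDerivAt_id t).const_mul (v : ℝ)).mul (hsucc t (n + 1))).add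
            ((hsucc t n).const_mul ((n + 1 : ℝ) * v))
      have hL := hsucc t (n + 2)
      rw [funext ih] at hL
      rw [hL.unique hR]
      simp; ring
  have := key n 0
  simpa [iteratedDeriv_mgf_zero (hint 0)] using this

lemma pairCount_succ_succ (n : ℕ) : pairCount (n + 2) = (n + 1) * pairCount n := by
  unfold pairCount
  rcases n with _ | n
  · simp
  · by_cases h : Even (n + 1)
    · have h' : Even (n + 1 + 2) := h.add even_two
      rw [if_pos h, if_pos h']
      exact Nat.doubleFactorial_add_two n
    · have h' : ¬ Even (n + 1 + 2) := by
        rw [Nat.even_add]; simpa using h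
      rw [if_neg h, if_neg h']; simp

/-- The moment recursion and its initial values force the closed form. -/
lemma eq_pairCount_of_recurrence {m : ℕ → ℝ} {v : ℝ} (hv : 0 ≤ v) (h0 : m 0 = 1) (h1 : m 1 = 0)
    (h2 : ∀ n, m (n + 2) = (n + 1) * v * m n) (n : ℕ) :
    m n = pairCount n * v ^ ((n : ℝ) / 2) := by
  induction n using Nat.twoStepInduction with
  | zero => simp [h0, pairCount]
  | one => simp [h1, pairCount]
  | more n ih _ =>
    rw [h2, ih, pairCount_succ_succ]
    have : ((n + 2 : ℕ) : ℝ) / 2 = (n : ℝ) / 2 + 1 := by push_cast; ring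
    rw [this, Real.rpow_add_one' hv (by positivity)]
    push_cast; ring

/-! ### Stein's identity in one variable -/

lemma integrable_pow_gaussian (v : NNReal) (n : ℕ) :
    Integrable (fun x : ℝ => x ^ n) (gaussianReal 0 v) := by
  have := integrable_pow_of_mem_interior_integrableExpSet (X := id) (μ := gaussianReal 0 v)
    (by simp [integrableExpSet_id_gaussianReal]) n
  simpa using this

lemma integrable_polynomial_gaussian (P : Polynomial ℝ) :
    Integrable (fun x : ℝ => P.eval x) (gaussianReal 0 1) := by
  induction P using Polynomial.induction_on' with
  | add p q hp hq =>
    simp only [Polynomial.eval_add]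
    exact hp.add hq
  | monomial n a => simpa using (integrable_pow_gaussian 1 n).const_mul a

/-- Stein's identity (Gaussian integration by parts) for polynomials. -/
lemma stein_polynomial (P : Polynomial ℝ) :
    ∫ x, x * P.eval x ∂gaussianReal 0 1 = ∫ x, P.derivative.eval x ∂gaussianReal 0 1 := by
  induction P using Polynomial.induction_on' with
  | add p q hp hq =>
    have hX : ∀ p : Polynomial ℝ, Integrable (fun x => x * p.eval x) (gaussianReal 0 1) := by
      intro p
      have := integrable_polynomial_gaussian (Polynomial.X * p)
      simpa only [Polynomial.eval_mul, Polynomial.eval_X] using this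
    simp only [Polynomial.eval_add, mul_add, Polynomial.derivative_add]
    rw [integral_add (hX p) (hX q), hp, hq, integral_add (integrable_polynomial_gaussian _)
      (integrable_polynomial_gaussian _)]
  | monomial n a =>
    rcases n with _ | n
    · simp [integral_mul_const]
    · have := gaussian_moment_succ_succ 1 n
      have e : ∀ x : ℝ, x * (Polynomial.monomial (n + 1) a).eval x = a * x ^ (n + 2) := by
        intro x; simp; ring
      simp only [e, integral_const_mul, this]
      simp [integral_const_mul]
      ring

lemma stein_two_factors (a b p q : ℝ) (s t : ℕ) :
    ∫ x, x * ((a * x + p) ^ s * (b * x + q) ^ t) ∂gaussianReal 0 1 =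
      ∫ x, (s * a * ((a * x + p) ^ (s - 1) * (b * x + q) ^ t)
        + t * b * ((a * x + p) ^ s * (b * x + q) ^ (t - 1))) ∂gaussianReal 0 1 := by
  have := stein_polynomial ((Polynomial.C a * Polynomial.X + Polynomial.C p) ^ s
    * (Polynomial.C b * Polynomial.X + Polynomial.C q) ^ t)
  simp only [Polynomial.derivative_mul, Polynomial.derivative_pow] at this
  simp at this
  rw [this]
  congr 1; ext x; ring

/-! ### Mixed moments of a Gaussian pair -/

/-- The mixed moment `E[Z₁^s Z₂^t]` of `Z₁ = a X + b Y`, `Z₂ = c X + d Y`, with `X, Y`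
independent standard Gaussians. -/
noncomputable def mixedMoment (a b c d : ℝ) (s t : ℕ) : ℝ :=
  ∫ w : ℝ × ℝ, (a * w.1 + b * w.2) ^ s * (c * w.1 + d * w.2) ^ t
    ∂((gaussianReal 0 1).prod (gaussianReal 0 1))

lemma integrable_mixed_aux (a b c d : ℝ) (s t : ℕ) : ∀ i j : ℕ,
    Integrable (fun w : ℝ × ℝ => w.1 ^ i * w.2 ^ j *
      ((a * w.1 + b * w.2) ^ s * (c * w.1 + d * w.2) ^ t))
      ((gaussianReal 0 1).prod (gaussianReal 0 1)) := by
  induction s with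
  | zero =>
    induction t with
    | zero =>
      intro i j
      simpa using (integrable_pow_gaussian 1 i).mul_prod (integrable_pow_gaussian 1 j)
    | succ t ih =>
      intro i j
      refine (((ih (i + 1) j).const_mul c).add ((ih i (j + 1)).const_mul d)).congr
        (.of_forall fun w => ?_)
      simp only [Pi.add_apply]; ring
  | succ s ih =>
    intro i j
    refine (((ih (i + 1) j).const_mul a).add ((ih i (j + 1)).const_mul b)).congr
      (.of_forall fun w => ?_)
    simp only [Pi.add_apply]; ring

lemma integrable_mixed (a b c d : ℝ) (s t : ℕ) :
    Integrable (fun w : ℝ × ℝ => (a * w.1 + b * w.2) ^ s * (c * w.1 + d * w.2) ^ t)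
      ((gaussianReal 0 1).prod (gaussianReal 0 1)) := by
  simpa using integrable_mixed_aux a b c d s t 0 0

lemma stein_fst (a b c d : ℝ) (s t : ℕ) :
    ∫ w : ℝ × ℝ, w.1 * ((a * w.1 + b * w.2) ^ s * (c * w.1 + d * w.2) ^ t)
      ∂((gaussianReal 0 1).prod (gaussianReal 0 1))
    = s * a * mixedMoment a b c d (s - 1) t + t * c * mixedMoment a b c d s (t - 1) := by
  have hL : Integrable (fun w : ℝ × ℝ => w.1 * ((a * w.1 + b * w.2) ^ s * (c * w.1 + d * w.2) ^ t))
      ((gaussianReal 0 1).prod (gaussianReal 0 1)) := by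
    simpa using integrable_mixed_aux a b c d s t 1 0
  have h1 := (integrable_mixed a b c d (s - 1) t).const_mul (s * a)
  have h2 := (integrable_mixed a b c d s (t - 1)).const_mul (t * c)
  rw [mixedMoment, mixedMoment, ← integral_const_mul, ← integral_const_mul, ← integral_add h1 h2,
    integral_prod_symm _ hL]
  refine Eq.trans ?_ (integral_prod_symm _ (h1.add h2)).symm
  congr 1; ext y
  exact stein_two_factors a c (b * y) (d * y) s t

lemma stein_snd (a b c d : ℝ) (s t : ℕ) :
    ∫ w : ℝ × ℝ, w.2 * ((a * w.1 + b * w.2) ^ s * (c * w.1 + d * w.2) ^ t)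
      ∂((gaussianReal 0 1).prod (gaussianReal 0 1))
    = s * b * mixedMoment a b c d (s - 1) t + t * d * mixedMoment a b c d s (t - 1) := by
  have hL : Integrable (fun w : ℝ × ℝ => w.2 * ((a * w.1 + b * w.2) ^ s * (c * w.1 + d * w.2) ^ t))
      ((gaussianReal 0 1).prod (gaussianReal 0 1)) := by
    simpa using integrable_mixed_aux a b c d s t 0 1
  have h1 := (integrable_mixed a b c d (s - 1) t).const_mul (s * b)
  have h2 := (integrable_mixed a b c d s (t - 1)).const_mul (t * d)
  rw [mixedMoment, mixedMoment, ← integral_const_mul, ← integral_const_mul, ← integral_add h1 h2,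
    integral_prod _ hL]
  refine Eq.trans ?_ (integral_prod _ (h1.add h2)).symm
  congr 1; ext x
  have := stein_two_factors b d (a * x) (c * x) s t
  simp only [add_comm (_ * _) (_ * x)] at this
  exact this

/-- The Isserlis recursion: pair one factor `Z₁` with each of the other factors. At `s = 0` or
`t = 0` the truncated subtraction is harmless, since its coefficient vanishes. -/
lemma mixedMoment_succ (a b c d : ℝ) (s t : ℕ) :
    mixedMoment a b c d (s + 1) t =
      s * (a ^ 2 + b ^ 2) * mixedMoment a b c d (s - 1) t
        + t * (a * c + b * d) * mixedMoment a b c d s (t - 1) := by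
  have h1 := (integrable_mixed_aux a b c d s t 1 0).const_mul a
  have h2 := (integrable_mixed_aux a b c d s t 0 1).const_mul b
  simp only [pow_one, pow_zero, mul_one, one_mul] at h1 h2
  have : mixedMoment a b c d (s + 1) t =
      a * (∫ w : ℝ × ℝ, w.1 * ((a * w.1 + b * w.2) ^ s * (c * w.1 + d * w.2) ^ t)
        ∂((gaussianReal 0 1).prod (gaussianReal 0 1)))
      + b * (∫ w : ℝ × ℝ, w.2 * ((a * w.1 + b * w.2) ^ s * (c * w.1 + d * w.2) ^ t)
        ∂((gaussianReal 0 1).prod (gaussianReal 0 1))) := by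
    rw [← integral_const_mul, ← integral_const_mul, ← integral_add h1 h2, mixedMoment]
    congr 1; ext w; ring
  rw [this, stein_fst, stein_snd]
  ring

lemma mixedMoment_zero_zero (a b c d : ℝ) : mixedMoment a b c d 0 0 = 1 := by
  simp [mixedMoment]

lemma mixedMoment_swap (a b c d : ℝ) (s t : ℕ) :
    mixedMoment a b c d s t = mixedMoment c d a b t s := by
  simp only [mixedMoment, mul_comm]

lemma mixedMoment_left (a b c d : ℝ) (n : ℕ) :
    mixedMoment a b c d n 0 = pairCount n * (a ^ 2 + b ^ 2) ^ ((n : ℝ) / 2) := by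
  refine eq_pairCount_of_recurrence (m := fun n => mixedMoment a b c d n 0) (by positivity)
    (mixedMoment_zero_zero a b c d) ?_ ?_ n
  · simpa using mixedMoment_succ a b c d 0 0
  · intro n
    simpa using mixedMoment_succ a b c d (n + 1) 0

/-! ### Counting pairings by the number of cross pairs -/

/-- The contribution of the pairings with exactly `u` cross pairs, in terms of the marginal
moment sequences `α`, `β` and the covariance `r`. -/
def crossTerm (α β : ℕ → ℝ) (r : ℝ) (s t u : ℕ) : ℝ :=
  s.choose u * t.choose u * u.factorial * α (s - u) * β (t - u) * r ^ u

/-- Pascal's rule, combined with the recursion for `α`, splits off the two ways of pairing an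
additional factor. -/
lemma crossTerm_succ_succ {α : ℕ → ℝ} {A : ℝ} (β : ℕ → ℝ) (r : ℝ) (h1 : α 1 = 0)
    (h2 : ∀ n, α (n + 2) = (n + 1) * A * α n) (s t u : ℕ) :
    crossTerm α β r (s + 1) t (u + 1) = s * A * crossTerm α β r (s - 1) t (u + 1)
      + t * r * crossTerm α β r s (t - 1) u := by
  have hA : (s.choose (u + 1) : ℝ) * α (s - u)
      = s * A * ((s - 1).choose (u + 1) * α (s - 1 - (u + 1))) := by
    rcases lt_trichotomy s (u + 1) with h | h | h
    · rw [Nat.choose_eq_zero_of_lt h, Nat.choose_eq_zero_of_lt (by omega)]; simp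
    · subst h; simp [h1]
    · obtain ⟨k, rfl⟩ := Nat.exists_eq_add_of_lt h
      have e1 : u + 1 + k + 1 - u = k + 2 := by omega
      have e2 : u + 1 + k + 1 - 1 - (u + 1) = k := by omega
      have e4 := Nat.choose_mul_succ_eq (u + 1 + k) (u + 1)
      have e5 : u + 1 + k + 1 - (u + 1) = k + 1 := by omega
      rw [e5] at e4
      rw [e1, e2, h2]
      have e6 : ((u + 1 + k).choose (u + 1) : ℝ) * (u + 1 + k + 1)
        = (u + 1 + k + 1).choose (u + 1) * (k + 1) := by exact_mod_cast e4
      simp only [Nat.add_sub_cancel]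
      push_cast
      linear_combination - A * α k * e6
  have hB : (t.choose (u + 1) : ℝ) * (u + 1) = t * (t - 1).choose u := by
    rcases t with _ | t
    · simp
    · have := Nat.add_one_mul_choose_eq t u
      simp only [Nat.add_sub_cancel]
      exact_mod_cast this.symm
  have e : t - 1 - u = t - (u + 1) := by omega
  unfold crossTerm
  rw [Nat.choose_succ_succ, Nat.factorial_succ, e, Nat.add_sub_add_right]
  push_cast
  linear_combination
    (t.choose (u + 1) * ((u + 1) * u.factorial) * β (t - (u + 1)) * r ^ (u + 1) : ℝ) * hA
    + (s.choose u * u.factorial * α (s - u) * β (t - (u + 1)) * r ^ (u + 1) : ℝ) * hB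

lemma crossTerm_succ_zero {α : ℕ → ℝ} {A : ℝ} (β : ℕ → ℝ) (r : ℝ) (h1 : α 1 = 0)
    (h2 : ∀ n, α (n + 2) = (n + 1) * A * α n) (s t : ℕ) :
    crossTerm α β r (s + 1) t 0 = s * A * crossTerm α β r (s - 1) t 0 := by
  rcases s with _ | s
  · simp [crossTerm, h1]
  · simp [crossTerm, h2]; ring

/-- Any array satisfying the Isserlis recursion is the sum of the cross terms. The summation range
is any one containing all the nonzero terms. -/
lemma eq_sum_crossTerm {M : ℕ → ℕ → ℝ} {α β : ℕ → ℝ} {A r : ℝ} (h0 : α 0 = 1) (h1 : α 1 = 0)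
    (h2 : ∀ n, α (n + 2) = (n + 1) * A * α n) (hM0 : ∀ t, M 0 t = β t)
    (hM : ∀ s t, M (s + 1) t = s * A * M (s - 1) t + t * r * M s (t - 1)) (s : ℕ) :
    ∀ t N : ℕ, min s t ≤ N → M s t = ∑ u ∈ Finset.range (N + 1), crossTerm α β r s t u := by
  induction s using Nat.strong_induction_on with
  | _ s ih =>
    rcases s with _ | s
    · intro t N _
      rw [Finset.sum_range_succ', Finset.sum_eq_zero (by intro u _; simp [crossTerm])]
      simp [crossTerm, hM0, h0]
    · intro t N hN
      rw [hM, Finset.sum_range_succ', crossTerm_succ_zero β r h1 h2]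
      simp only [crossTerm_succ_succ β r h1 h2]
      rw [Finset.sum_add_distrib, ← Finset.mul_sum, ← Finset.mul_sum, add_right_comm, ← mul_add,
        ← Finset.sum_range_succ' (fun u => crossTerm α β r (s - 1) t u),
        ← ih (s - 1) (by omega) t N (by omega)]
      congr 1
      rcases t with _ | t
      · simp
      · obtain ⟨N, rfl⟩ : ∃ k, N = k + 1 := ⟨N - 1, by omega⟩
        rw [ih s (by omega) _ N (by omega)]

/-! ### The moment formulas -/

/-- Lemma 3.11, Isserlis: moments of centered Gaussians.
Part (a) is stated for `Z ~ N(0,v)`; part (b) for a centered jointly Gaussian pair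
`(Z₁,Z₂) = (a·X + b·Y, c·X + d·Y)` with `X, Y` independent standard Gaussians
(every centered Gaussian vector in `ℝ²` arises this way). -/
theorem isserlis_moments :
    -- (a)
    (∀ (v : NNReal) (s : ℕ),
      (∫ z : ℝ, z ^ s ∂(gaussianReal 0 v)) =
        (pairCount s : ℝ) * (v : ℝ) ^ ((s : ℝ) / 2)) ∧
    -- (b)
    (∀ a b c d : ℝ, ∀ s t : ℕ,
      ∀ μ : Measure (ℝ × ℝ),
        μ = Measure.map (fun w : ℝ × ℝ => (a * w.1 + b * w.2, c * w.1 + d * w.2))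
              ((gaussianReal 0 1).prod (gaussianReal 0 1)) →
        (∫ z : ℝ × ℝ, z.1 ^ s * z.2 ^ t ∂μ) -
            (∫ z : ℝ × ℝ, z.1 ^ s ∂μ) * (∫ z : ℝ × ℝ, z.2 ^ t ∂μ) =
          ∑ u ∈ Finset.Icc 1 (min s t),
            (s.choose u : ℝ) * (t.choose u : ℝ) * (u.factorial : ℝ) *
              (pairCount (s - u) : ℝ) * (pairCount (t - u) : ℝ) *
              (∫ z : ℝ × ℝ, z.1 ^ 2 ∂μ) ^ (((s : ℝ) - (u : ℝ)) / 2) *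
              (∫ z : ℝ × ℝ, z.2 ^ 2 ∂μ) ^ (((t : ℝ) - (u : ℝ)) / 2) *
              (∫ z : ℝ × ℝ, z.1 * z.2 ∂μ) ^ u) := by
  refine ⟨fun v s => ?_, ?_⟩
  · refine eq_pairCount_of_recurrence (m := fun n => ∫ z : ℝ, z ^ n ∂(gaussianReal 0 v))
      v.coe_nonneg (by simp) (by simp) (gaussian_moment_succ_succ v) s
  · rintro a b c d s t μ rfl
    have hm : Measurable (fun w : ℝ × ℝ => (a * w.1 + b * w.2, c * w.1 + d * w.2)) := by fun_prop
    have hmap : ∀ i j : ℕ, ∫ z : ℝ × ℝ, z.1 ^ i * z.2 ^ j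
        ∂(Measure.map (fun w : ℝ × ℝ => (a * w.1 + b * w.2, c * w.1 + d * w.2))
              ((gaussianReal 0 1).prod (gaussianReal 0 1))) = mixedMoment a b c d i j := by
      intro i j
      rw [integral_map hm.aemeasurable
        (Continuous.aestronglyMeasurable (by fun_prop)), mixedMoment]
    have hR : ∀ n : ℕ, mixedMoment a b c d 0 n = pairCount n * (c ^ 2 + d ^ 2) ^ ((n : ℝ) / 2) := by
      intro n
      rw [mixedMoment_swap, mixedMoment_left]
    have hs := hmap s 0
    have ht := hmap 0 t
    have h20 := hmap 2 0
    have h02 := hmap 0 2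
    have h11 := hmap 1 1
    have hA : mixedMoment a b c d 2 0 = a ^ 2 + b ^ 2 := by
      simpa [mixedMoment_zero_zero] using mixedMoment_succ a b c d 1 0
    have hB : mixedMoment a b c d 0 2 = c ^ 2 + d ^ 2 := by
      rw [mixedMoment_swap]
      simpa [mixedMoment_zero_zero] using mixedMoment_succ c d a b 1 0
    have hC : mixedMoment a b c d 1 1 = a * c + b * d := by
      simpa [mixedMoment_zero_zero] using mixedMoment_succ a b c d 0 1
    rw [hA] at h20
    rw [hB] at h02
    rw [hC] at h11
    simp only [pow_zero, pow_one, mul_one, one_mul] at hs ht h20 h02 h11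
    rw [hmap, hs, ht, h20, h02, h11]
    have main := eq_sum_crossTerm (M := mixedMoment a b c d)
      (α := fun n => mixedMoment a b c d n 0) (β := fun n => mixedMoment a b c d 0 n)
      (A := a ^ 2 + b ^ 2) (r := a * c + b * d)
      (mixedMoment_zero_zero a b c d) (by simpa using mixedMoment_succ a b c d 0 0)
      (fun n => by simpa using mixedMoment_succ a b c d (n + 1) 0) (fun _ => rfl)
      (mixedMoment_succ a b c d) s t (min s t) le_rfl
    -- The term without cross pairs is the product of the marginal moments.
    rw [main, Finset.sum_range_succ', Finset.range_eq_Ico,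
      Finset.sum_Ico_add' (fun u => crossTerm _ _ _ s t u) 0 (min s t) 1]
    have e0 : crossTerm (fun n => mixedMoment a b c d n 0) (fun n => mixedMoment a b c d 0 n)
        (a * c + b * d) s t 0 = mixedMoment a b c d s 0 * mixedMoment a b c d 0 t := by
      simp [crossTerm]
    rw [e0, add_sub_cancel_right, zero_add]
    refine Finset.sum_congr rfl fun u hu => ?_
    have hu' : u ≤ s ∧ u ≤ t := by
      simp only [Finset.mem_Icc] at hu; omega
    simp only [crossTerm]
    rw [mixedMoment_left, hR, Nat.cast_sub hu'.1, Nat.cast_sub hu'.2]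
    ring
end
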